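/- Let F(x) = f(x) + P₁(x) − P₂(x) be level-bounded, and let {x^k} and {ξ^k} be the sequences generated by pDCA_e for minimizing F. Then there exists D > 0 such that for every k ≥ 1, dist(0, ∂E(x^k, ξ^k, x^{k−1})) ≤ D(‖x^k − x^{k−1}‖ + ‖x^{k−1} − x^{k−2}‖), where ∂E denotes the limiting subdifferential of E. In particular, for every k ≥ 1 the vector (∇f(x^k) − ∇f(u^{k−1}) − L(x^{k−1} − u^{k−1}), x^{k−1} − x^k, −L(x^k − x^{k−1})) belongs to ∂E(x^k, ξ^k, x^{k−1}). -/

import Mathlib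

/-!
The vector is in fact a Fréchet subgradient of `E` at `(x^k, ξ^k, x^{k-1})`, so constant sequences
witness membership in the limiting subdifferential.

Write `v = ξ^k - ∇f(u^{k-1}) - L (x^k - u^{k-1})`. Minimality of `x^k` in the proximal subproblem
says exactly that `P₁ z ≥ P₁ x^k + ⟪v, z - x^k⟫ - L/2 ‖z - x^k‖²` for all `z`
(`P₁_lower_of_prox`), and Fenchel's inequality gives `P₂* y ≥ ⟪x^{k-1}, y⟫ - P₂ x^{k-1}`, with
equality at `y = ξ^k` because `ξ^k ∈ ∂P₂(x^{k-1})` (`conjE_eq_of_subgrad`). Inserting both bounds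
into `E` produces a real-valued minorant that touches `E` at the base point, is differentiable
there, and has the claimed vector as its gradient; the error terms other than the one of `f` are
quadratic in the increment (`frechet_potE3`).

The distance estimate follows since `0` is at distance at most the norm of this vector, which the
Lipschitz continuity of `∇f` and `0 ≤ β_k < 1` bound with `D = 2L + 1`.
-/

open Filter Topology Set Metric Bornology
open scoped RealInnerProductSpace

noncomputable section

abbrev Eucl (n : ℕ) := EuclideanSpace ℝ (Fin n)

variable {H : Type*} [NormedAddCommGroup H] [InnerProductSpace ℝ H]

/-- Fréchet (regular) subgradient of an extended-real-valued function. -/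
def FrechetSubgradAt (h : H → EReal) (v x : H) : Prop :=
  ∀ ε : ℝ, 0 < ε →
    ∀ᶠ y in 𝓝[≠] x, h x + ((⟪v, y - x⟫ - ε * ‖y - x‖ : ℝ) : EReal) ≤ h y

/-- Limiting (Mordukhovich) subdifferential. -/
def limSubdiff (h : H → EReal) (x : H) : Set H :=
  {v | ∃ xs vs : ℕ → H,
    Tendsto xs atTop (𝓝 x) ∧
    Tendsto (fun k => h (xs k)) atTop (𝓝 (h x)) ∧
    Tendsto vs atTop (𝓝 v) ∧
    ∀ k, FrechetSubgradAt h (vs k) (xs k)}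

/-- Convex subgradient of a real-valued function. -/
def ConvexSubgradAt (g : H → ℝ) (v x : H) : Prop :=
  ∀ y, g x + ⟪v, y - x⟫ ≤ g y

/-- Convex subgradient of an extended-real-valued function. -/
def ConvexSubgradAtE (g : H → EReal) (v x : H) : Prop :=
  ∀ y, g x + ((⟪v, y - x⟫ : ℝ) : EReal) ≤ g y

/-- Convex conjugate of a real-valued function. -/
def conjE (g : H → ℝ) (y : H) : EReal :=
  ⨆ x : H, ((⟪x, y⟫ - g x : ℝ) : EReal)

/-- `P` is proper, closed (lsc) and convex. -/
def ProperClosedConvexE (P : H → EReal) : Prop :=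
  (∀ x, P x ≠ ⊥) ∧ (∃ x, P x ≠ ⊤) ∧ LowerSemicontinuous P ∧
  (∀ x y : H, ∀ t : ℝ, t ∈ Ioo (0:ℝ) 1 →
    P (t • x + (1 - t) • y) ≤ (t : EReal) * P x + ((1 - t : ℝ) : EReal) * P y)

/-- KL property with exponent `α` at a point. -/
def KLExpAt (h : H → EReal) (α : ℝ) (x₀ : H) : Prop :=
  ∃ c > (0:ℝ), ∃ ε > (0:ℝ), ∃ a > (0:ℝ), ∀ x : H,
    ‖x - x₀‖ ≤ ε → h x₀ < h x → h x < h x₀ + (a : EReal) →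
    (limSubdiff h x).Nonempty →
    1 ≤ c * (1 - α) * ((h x).toReal - (h x₀).toReal) ^ (-α) * infDist 0 (limSubdiff h x)

/-- KL function with exponent `α`. -/
def IsKLWithExp (h : H → EReal) (α : ℝ) : Prop :=
  ∀ x₀ : H, (limSubdiff h x₀).Nonempty → KLExpAt h α x₀

/-- KL property (general desingularizing function) at a point. -/
def KLAt (h : H → EReal) (x₀ : H) : Prop :=
  ∃ a > (0:ℝ), ∃ U ∈ 𝓝 x₀, ∃ φ φd : ℝ → ℝ,
    ContinuousOn φ (Ico 0 a) ∧ ConcaveOn ℝ (Ico 0 a) φ ∧ φ 0 = 0 ∧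
    (∀ s ∈ Ico (0:ℝ) a, 0 ≤ φ s) ∧
    (∀ s ∈ Ioo (0:ℝ) a, HasDerivAt φ (φd s) s ∧ 0 < φd s) ∧
    ∀ x ∈ U, h x₀ < h x → h x < h x₀ + (a : EReal) → (limSubdiff h x).Nonempty →
      1 ≤ φd ((h x).toReal - (h x₀).toReal) * infDist 0 (limSubdiff h x)

/-- KL function. -/
def IsKLFun (h : H → EReal) : Prop :=
  ∀ x₀ : H, (limSubdiff h x₀).Nonempty → KLAt h x₀

/-- The potential function `E(x,y,w) = f(x) + P₁(x) - ⟨x,y⟩ + P₂*(y) + L/2 ‖x-w‖²`. -/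
def potE (f : H → ℝ) (P₁ : H → EReal) (P₂ : H → ℝ) (L : ℝ) (x y w : H) : EReal :=
  ((f x : ℝ) : EReal) + P₁ x - ((⟪x, y⟫ : ℝ) : EReal) + conjE P₂ y
    + ((L / 2 * ‖x - w‖ ^ 2 : ℝ) : EReal)

/-- The pDCAe iteration: `ξ^{k+1} ∈ ∂P₂(x^k)`, `u^k = x^k + β_k (x^k - x^{k-1})` and
`x^{k+1}` is the minimizer of `⟨∇f(u^k) - ξ^{k+1}, ·⟩ + L/2 ‖· - u^k‖² + P₁(·)`.
(`x⁻¹ = x⁰` is encoded by truncated subtraction in `ℕ`.) -/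
def IsPDCAe (f' : H → H) (P₁ : H → EReal) (P₂ : H → ℝ) (L : ℝ) (β : ℕ → ℝ)
    (x ξ : ℕ → H) : Prop :=
  P₁ (x 0) ≠ ⊤ ∧
  (∀ k : ℕ, ConvexSubgradAt P₂ (ξ (k + 1)) (x k)) ∧
  (∀ k : ℕ, ∀ z : H,
    ((⟪f' (x k + β k • (x k - x (k - 1))) - ξ (k + 1), x (k + 1)⟫
        + L / 2 * ‖x (k + 1) - (x k + β k • (x k - x (k - 1)))‖ ^ 2 : ℝ) : EReal)
      + P₁ (x (k + 1))
      ≤ ((⟪f' (x k + β k • (x k - x (k - 1))) - ξ (k + 1), z⟫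
        + L / 2 * ‖z - (x k + β k • (x k - x (k - 1)))‖ ^ 2 : ℝ) : EReal) + P₁ z)

/-- Triples `(x, y, w)` with the ℓ² product inner product structure. -/
abbrev Trip (n : ℕ) := WithLp 2 (Eucl n × WithLp 2 (Eucl n × Eucl n))

def mkTrip {n : ℕ} (a b c : Eucl n) : Trip n :=
  (WithLp.equiv 2 _).symm (a, (WithLp.equiv 2 _).symm (b, c))

/-- `potE` as a function on triples. -/
def potE3 {n : ℕ} (f : Eucl n → ℝ) (P₁ : Eucl n → EReal) (P₂ : Eucl n → ℝ) (L : ℝ)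
    (p : Trip n) : EReal :=
  potE f P₁ P₂ L ((WithLp.equiv 2 _) p).1 ((WithLp.equiv 2 _) ((WithLp.equiv 2 _) p).2).1
    ((WithLp.equiv 2 _) ((WithLp.equiv 2 _) p).2).2

lemma mkTrip_sub {n : ℕ} (a b c a' b' c' : Eucl n) :
    mkTrip a b c - mkTrip a' b' c' = mkTrip (a - a') (b - b') (c - c') := rfl

lemma inner_mkTrip {n : ℕ} (a b c a' b' c' : Eucl n) :
    ⟪mkTrip a b c, mkTrip a' b' c'⟫ = ⟪a, a'⟫ + ⟪b, b'⟫ + ⟪c, c'⟫ := by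
  simp [mkTrip, WithLp.prod_inner_apply, add_assoc]

lemma norm_sq_mkTrip {n : ℕ} (a b c : Eucl n) :
    ‖mkTrip a b c‖ ^ 2 = ‖a‖ ^ 2 + ‖b‖ ^ 2 + ‖c‖ ^ 2 := by
  simp only [← real_inner_self_eq_norm_sq, inner_mkTrip]

lemma norm_mkTrip_le {n : ℕ} (a b c : Eucl n) : ‖mkTrip a b c‖ ≤ ‖a‖ + ‖b‖ + ‖c‖ := by
  refine abs_le_of_sq_le_sq' ?_ (by positivity) |>.2
  rw [norm_sq_mkTrip]
  nlinarith [norm_nonneg a, norm_nonneg b, norm_nonneg c,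
    mul_nonneg (norm_nonneg a) (norm_nonneg b), mul_nonneg (norm_nonneg a) (norm_nonneg c),
    mul_nonneg (norm_nonneg b) (norm_nonneg c)]

lemma norm_fst_le_mkTrip {n : ℕ} (a b c : Eucl n) : ‖a‖ ≤ ‖mkTrip a b c‖ := by
  refine abs_le_of_sq_le_sq' ?_ (by positivity) |>.2
  rw [norm_sq_mkTrip]
  nlinarith [sq_nonneg ‖b‖, sq_nonneg ‖c‖]

/-- Equality case of Fenchel's inequality. -/
lemma conjE_eq_of_subgrad {P : H → ℝ} {v x : H} (h : ConvexSubgradAt P v x) :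
    conjE P v = ((⟪x, v⟫ - P x : ℝ) : EReal) := by
  refine le_antisymm (iSup_le fun z => ?_)
    (le_iSup (fun z : H => ((⟪z, v⟫ - P z : ℝ) : EReal)) x)
  have := h z
  rw [inner_sub_right, real_inner_comm, real_inner_comm x v] at this
  exact EReal.coe_le_coe_iff.2 (by linarith)

/-- Expanding the square, minimality in the proximal subproblem is a quadratic lower bound on `P`
with slope `ξ - g - L (y - u)`. -/
lemma P₁_lower_of_prox {P : H → EReal} {g ξ u y : H} {L p : ℝ} (hp : P y = (p : EReal))
    (h : ∀ z : H, ((⟪g - ξ, y⟫ + L / 2 * ‖y - u‖ ^ 2 : ℝ) : EReal) + P y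
      ≤ ((⟪g - ξ, z⟫ + L / 2 * ‖z - u‖ ^ 2 : ℝ) : EReal) + P z) (z : H) :
    ((p + ⟪ξ - g - L • (y - u), z - y⟫ - L / 2 * ‖z - y‖ ^ 2 : ℝ) : EReal) ≤ P z := by
  have hz := h z
  rw [hp] at hz
  have hexp : ‖z - u‖ ^ 2 = ‖z - y‖ ^ 2 + 2 * ⟪y - u, z - y⟫ + ‖y - u‖ ^ 2 := by
    rw [show z - u = (z - y) + (y - u) by abel, norm_add_sq_real, real_inner_comm]
  induction hq : P z with
  | bot =>
    rw [hq, EReal.add_bot, ← EReal.coe_add] at hz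
    exact absurd (le_bot_iff.1 hz) (EReal.coe_ne_bot _)
  | top => exact le_top
  | coe q =>
    rw [hq, ← EReal.coe_add, ← EReal.coe_add, EReal.coe_le_coe_iff, hexp] at hz
    rw [EReal.coe_le_coe_iff]
    simp only [inner_sub_left, inner_sub_right, real_inner_smul_left] at hz ⊢
    linarith

/-- If `P₁` has the quadratic minorant with slope `v` at `a₀` and `b₀ ∈ ∂P₂(w)`, then the gradient
of the resulting minorant of `E` is a Fréchet subgradient of `E` at `(a₀, b₀, c₀)`. -/
lemma frechet_potE3 {n : ℕ} {f : Eucl n → ℝ} {P₁ : Eucl n → EReal} {P₂ : Eucl n → ℝ} {L p : ℝ}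
    {a₀ b₀ c₀ f₀ v w : Eucl n} (hL : 0 < L) (hf : HasGradientAt f f₀ a₀)
    (hp : P₁ a₀ = (p : EReal))
    (hlow : ∀ z, ((p + ⟪v, z - a₀⟫ - L / 2 * ‖z - a₀‖ ^ 2 : ℝ) : EReal) ≤ P₁ z)
    (hb : ConvexSubgradAt P₂ b₀ w) :
    FrechetSubgradAt (potE3 f P₁ P₂ L)
      (mkTrip (f₀ + v - b₀ + L • (a₀ - c₀)) (w - a₀) (-(L • (a₀ - c₀)))) (mkTrip a₀ b₀ c₀) := by
  intro ε hε
  have hcont : Tendsto (fun q : Trip n => q.fst) (𝓝 (mkTrip a₀ b₀ c₀)) (𝓝 a₀) :=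
    ((continuous_fst.comp (WithLp.prod_continuous_ofLp 2 _ _)).tendsto (mkTrip a₀ b₀ c₀))
  have hf1 := hcont.eventually ((hasGradientAt_iff_isLittleO.1 hf).def (half_pos hε))
  -- On this ball the quadratic error `(L/2 + 1) ‖·‖²` is at most `ε/2 ‖·‖`.
  have hball := Metric.ball_mem_nhds (mkTrip a₀ b₀ c₀) (show 0 < ε / (L + 2) by positivity)
  refine nhdsWithin_le_nhds ?_
  filter_upwards [hf1, hball] with q hq1 hq2
  obtain ⟨a, b, c, rfl⟩ : ∃ a b c, q = mkTrip a b c := ⟨q.fst, q.snd.fst, q.snd.snd, rfl⟩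
  rw [Metric.mem_ball, dist_eq_norm, mkTrip_sub, lt_div_iff₀ (by positivity)] at hq2
  rw [mkTrip_sub, inner_mkTrip]
  change ‖f a - f a₀ - ⟪f₀, a - a₀⟫‖ ≤ ε / 2 * ‖a - a₀‖ at hq1
  have hval : potE3 f P₁ P₂ L (mkTrip a₀ b₀ c₀) =
      ((f a₀ + p - ⟪a₀, b₀⟫ + (⟪w, b₀⟫ - P₂ w) + L / 2 * ‖a₀ - c₀‖ ^ 2 : ℝ) : EReal) := by
    change ((f a₀ : ℝ) : EReal) + P₁ a₀ - ((⟪a₀, b₀⟫ : ℝ) : EReal) + conjE P₂ b₀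
      + ((L / 2 * ‖a₀ - c₀‖ ^ 2 : ℝ) : EReal) = _
    rw [hp, conjE_eq_of_subgrad hb]
    norm_cast
  have hge : ((f a + (p + ⟪v, a - a₀⟫ - L / 2 * ‖a - a₀‖ ^ 2) - ⟪a, b⟫ + (⟪w, b⟫ - P₂ w)
      + L / 2 * ‖a - c‖ ^ 2 : ℝ) : EReal) ≤ potE3 f P₁ P₂ L (mkTrip a b c) := by
    change _ ≤ ((f a : ℝ) : EReal) + P₁ a - ((⟪a, b⟫ : ℝ) : EReal) + conjE P₂ b
      + ((L / 2 * ‖a - c‖ ^ 2 : ℝ) : EReal)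
    rw [EReal.coe_add, EReal.coe_add, EReal.coe_sub, EReal.coe_add (f a)]
    have hconj := le_iSup (fun z : Eucl n => ((⟪z, b⟫ - P₂ z : ℝ) : EReal)) w
    gcongr
    · exact EReal.sub_le_sub (add_le_add le_rfl (hlow a)) le_rfl
    · exact hconj
  refine le_trans ?_ hge
  rw [hval, ← EReal.coe_add, EReal.coe_le_coe_iff]
  have hn1 := norm_fst_le_mkTrip (a - a₀) (b - b₀) (c - c₀)
  have hnsq := norm_sq_mkTrip (a - a₀) (b - b₀) (c - c₀)
  set N := ‖mkTrip (a - a₀) (b - b₀) (c - c₀)‖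
  have hN : 0 ≤ N := norm_nonneg _
  have hquad : N ^ 2 * (L + 2) ≤ ε * N := by nlinarith
  have hf2 := (abs_le.1 hq1).1
  have hcs := real_inner_le_norm (a - a₀) (b - b₀)
  have hab : ⟪a - a₀, b - b₀⟫ ≤ N ^ 2 := by
    nlinarith [sq_nonneg (‖a - a₀‖ - ‖b - b₀‖), sq_nonneg ‖a - a₀‖, sq_nonneg ‖b - b₀‖,
      sq_nonneg ‖c - c₀‖]
  have haN : L * ‖a - a₀‖ ^ 2 ≤ L * N ^ 2 := by gcongr
  have hεN : ε * ‖a - a₀‖ ≤ ε * N := by gcongr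
  have hexp : ‖a - c‖ ^ 2 = ‖a₀ - c₀‖ ^ 2 + 2 * ⟪a₀ - c₀, (a - a₀) - (c - c₀)⟫
      + ‖(a - a₀) - (c - c₀)‖ ^ 2 := by
    rw [← norm_add_sq_real]; congr 2; abel
  have hbil : ⟪a, b⟫ = ⟪a₀, b₀⟫ + ⟪a - a₀, b - b₀⟫ + ⟪b₀, a - a₀⟫ + ⟪a₀, b - b₀⟫ := by
    simp only [inner_sub_left, inner_sub_right, real_inner_comm b₀]; ring
  have hwb : ⟪w, b⟫ = ⟪w, b₀⟫ + ⟪w, b - b₀⟫ := by rw [inner_sub_right]; ring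
  have hsq : 0 ≤ L * ‖(a - a₀) - (c - c₀)‖ ^ 2 := by positivity
  rw [hexp, hbil, hwb, inner_sub_right (a₀ - c₀), inner_add_left, inner_sub_left (f₀ + v),
    inner_add_left, inner_neg_left, real_inner_smul_left, real_inner_smul_left, inner_sub_left w]
  nlinarith

/-- Proposition 1(iv): subgradient bound for the potential function `E` along pDCAe. -/
theorem pDCAe_potE_subdiff_bound
    {n : ℕ} (f : Eucl n → ℝ) (f' : Eucl n → Eucl n) (P₁ : Eucl n → EReal)
    (P₂ : Eucl n → ℝ) (L : ℝ) (β : ℕ → ℝ) (x ξ : ℕ → Eucl n)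
    (hL : 0 < L)
    (hfconv : ConvexOn ℝ Set.univ f)
    (hfgrad : ∀ y, HasGradientAt f (f' y) y)
    (hflip : ∀ y z, ‖f' y - f' z‖ ≤ L * ‖y - z‖)
    (hP₁ : ProperClosedConvexE P₁)
    (hP₂cont : Continuous P₂)
    (hP₂conv : ConvexOn ℝ Set.univ P₂)
    (hβ : ∀ k, β k ∈ Set.Ico (0:ℝ) 1)
    (hβsup : ∃ B < (1:ℝ), ∀ k, β k ≤ B)
    (hlevel : ∀ γ : ℝ, IsBounded {y : Eucl n |
      ((f y : ℝ) : EReal) + P₁ y - ((P₂ y : ℝ) : EReal) ≤ (γ : EReal)})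
    (hseq : IsPDCAe f' P₁ P₂ L β x ξ)
    : (∃ D > (0:ℝ), ∀ k : ℕ, 1 ≤ k →
        infDist (0 : Trip n)
            (limSubdiff (potE3 f P₁ P₂ L) (mkTrip (x k) (ξ k) (x (k - 1))))
          ≤ D * (‖x k - x (k - 1)‖ + ‖x (k - 1) - x (k - 2)‖)) ∧
      ∀ k : ℕ, 1 ≤ k →
        mkTrip
            (f' (x k) - f' (x (k - 1) + β (k - 1) • (x (k - 1) - x (k - 2)))
              - L • (x (k - 1) - (x (k - 1) + β (k - 1) • (x (k - 1) - x (k - 2)))))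
            (x (k - 1) - x k)
            (-(L • (x k - x (k - 1))))
          ∈ limSubdiff (potE3 f P₁ P₂ L) (mkTrip (x k) (ξ k) (x (k - 1))) := by
  obtain ⟨h0, hsub, hmin⟩ := hseq
  have hmem : ∀ k : ℕ, 1 ≤ k →
        mkTrip
            (f' (x k) - f' (x (k - 1) + β (k - 1) • (x (k - 1) - x (k - 2)))
              - L • (x (k - 1) - (x (k - 1) + β (k - 1) • (x (k - 1) - x (k - 2)))))
            (x (k - 1) - x k)
            (-(L • (x k - x (k - 1))))
          ∈ limSubdiff (potE3 f P₁ P₂ L) (mkTrip (x k) (ξ k) (x (k - 1))) := by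
    intro k hk
    obtain ⟨j, rfl⟩ : ∃ j, k = j + 1 := ⟨k - 1, by omega⟩
    rw [show j + 1 - 2 = j - 1 by omega, Nat.add_sub_cancel]
    have hmj := hmin j
    set u := x j + β j • (x j - x (j - 1))
    -- Comparing with the feasible point `x 0` shows `P₁ (x (j + 1))` is finite.
    obtain ⟨p, hp⟩ : ∃ p : ℝ, P₁ (x (j + 1)) = (p : EReal) := by
      refine ⟨(P₁ (x (j + 1))).toReal, (EReal.coe_toReal (fun htop => ?_) (hP₁.1 _)).symm⟩
      have h := hmj (x 0)
      rw [htop, EReal.coe_add_top, top_le_iff, ← EReal.coe_toReal h0 (hP₁.1 _),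
        ← EReal.coe_add] at h
      exact EReal.coe_ne_top _ h
    have hF := frechet_potE3 (c₀ := x j) hL (hfgrad (x (j + 1))) hp (P₁_lower_of_prox hp hmj)
      (hsub j)
    have hvec : f' (x (j + 1)) + (ξ (j + 1) - f' u - L • (x (j + 1) - u)) - ξ (j + 1)
        + L • (x (j + 1) - x j) = f' (x (j + 1)) - f' u - L • (x j - u) := by
      module
    rw [hvec] at hF
    exact ⟨fun _ => _, fun _ => _, tendsto_const_nhds, tendsto_const_nhds, tendsto_const_nhds,
      fun _ => hF⟩
  refine ⟨⟨2 * L + 1, by positivity, fun k hk => ?_⟩, hmem⟩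
  refine (infDist_le_dist_of_mem (hmem k hk)).trans ?_
  rw [dist_zero_left]
  refine (norm_mkTrip_le _ _ _).trans ?_
  obtain ⟨hβ0, hβ1⟩ := hβ (k - 1)
  set d := x (k - 1) - x (k - 2)
  have hβd : ‖β (k - 1) • d‖ ≤ ‖d‖ := by
    rw [norm_smul, Real.norm_of_nonneg hβ0]
    exact mul_le_of_le_one_left (norm_nonneg _) hβ1.le
  have h1 : ‖f' (x k) - f' (x (k - 1) + β (k - 1) • d)‖ ≤ L * (‖x k - x (k - 1)‖ + ‖d‖) := by
    refine (hflip _ _).trans (mul_le_mul_of_nonneg_left ?_ hL.le)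
    rw [← sub_sub]
    exact (norm_sub_le _ _).trans (by gcongr)
  have h2 : ‖L • (x (k - 1) - (x (k - 1) + β (k - 1) • d))‖ ≤ L * ‖d‖ := by
    rw [sub_add_cancel_left, norm_smul, norm_neg, Real.norm_of_nonneg hL.le]
    gcongr
  have h3 := norm_sub_le (f' (x k) - f' (x (k - 1) + β (k - 1) • d))
    (L • (x (k - 1) - (x (k - 1) + β (k - 1) • d)))
  have h4 : ‖-(L • (x k - x (k - 1)))‖ = L * ‖x k - x (k - 1)‖ := by
    rw [norm_neg, norm_smul, Real.norm_of_nonneg hL.le]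
  rw [h4, norm_sub_rev (x (k - 1)) (x k)]
  nlinarith [norm_nonneg d]
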